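/- Let u be a prime play of a Zielonka automaton whose last (maximal) action is b. Then: (i) u is a dom(b)-broadcast; (ii) u is a P-broadcast; (iii) for every Q ⊆ P, u is a Q-broadcast if and only if u is a (P∖Q)-broadcast. -/

import Mathlib

namespace MazTrace

variable {A : Type*}

/-- Smallest equivalence on words over `A` generated by commuting two adjacent
independent letters (`a I b` iff `¬ D a b`). -/
inductive TraceRel (D : A → A → Prop) : List A → List A → Prop
  | refl (u : List A) : TraceRel D u u
  | swap (u v : List A) (a b : A) (h : ¬ D a b) :
      TraceRel D (u ++ a :: b :: v) (u ++ b :: a :: v)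
  | symm {u v : List A} : TraceRel D u v → TraceRel D v u
  | trans {u v w : List A} : TraceRel D u v → TraceRel D v w → TraceRel D u w

theorem TraceRel.append_right {D : A → A → Prop} {u u' : List A} (w : List A)
    (h : TraceRel D u u') : TraceRel D (u ++ w) (u' ++ w) := by
  induction h with
  | refl u => exact .refl _
  | swap x y a b hab =>
      simpa [List.append_assoc] using TraceRel.swap (D := D) x (y ++ w) a b hab
  | symm _ ih => exact ih.symm
  | trans _ _ ih1 ih2 => exact ih1.trans ih2

theorem TraceRel.append_left {D : A → A → Prop} {v v' : List A} (w : List A)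
    (h : TraceRel D v v') : TraceRel D (w ++ v) (w ++ v') := by
  induction h with
  | refl u => exact .refl _
  | swap x y a b hab =>
      simpa [List.append_assoc] using TraceRel.swap (D := D) (w ++ x) y a b hab
  | symm _ ih => exact ih.symm
  | trans _ _ ih1 ih2 => exact ih1.trans ih2

def traceSetoid (D : A → A → Prop) : Setoid (List A) :=
  ⟨TraceRel D, ⟨TraceRel.refl, TraceRel.symm, TraceRel.trans⟩⟩

/-- A Mazurkiewicz trace: an equivalence class of words. -/
def Trace (D : A → A → Prop) : Type _ := Quotient (traceSetoid D)

namespace Trace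

variable {D : A → A → Prop}

/-- The trace of a word. -/
def mk (D : A → A → Prop) (u : List A) : Trace D := Quotient.mk (traceSetoid D) u

/-- The empty trace. -/
instance : One (Trace D) := ⟨mk D []⟩

/-- Concatenation of traces, induced by concatenation of words. -/
instance : Mul (Trace D) :=
  ⟨fun s t => Quotient.liftOn₂ s t (fun u v => mk D (u ++ v))
    (fun _ _ _ _ hu hv =>
      Quotient.sound ((hu.append_right _).trans (TraceRel.append_left _ hv)))⟩

instance : Nonempty (Trace D) := ⟨1⟩

/-- Length of a trace: the length of any of its linearizations. -/
def length (t : Trace D) : ℕ :=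
  Quotient.liftOn t List.length (by
    intro u v h
    induction h with
    | refl u => rfl
    | swap x y a b hab => simp
    | symm _ ih => exact ih.symm
    | trans _ _ ih1 ih2 => exact ih1.trans ih2)

/-- The set of letters of a trace. -/
def alph (t : Trace D) : Set A :=
  Quotient.liftOn t (fun u => {a | a ∈ u}) (by
    intro u v h
    induction h with
    | refl u => rfl
    | swap x y a b hab => ext c; simp [List.mem_append]; tauto
    | symm _ ih => exact ih.symm
    | trans _ _ ih1 ih2 => exact ih1.trans ih2)

/-- Prefix order on traces: `s ⊑ t` iff `s * w = t` for some trace `w`. -/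
def Prefix (s t : Trace D) : Prop := ∃ w, s * w = t

/-- `t I B` : every letter of the trace `t` is independent of every element of `B`. -/
def IndepSet (t : Trace D) (B : Set A) : Prop := ∀ a ∈ t.alph, ∀ b ∈ B, ¬ D a b

/-- `w` is the `B`-view of `t`: the shortest prefix of `t` such that `t = w·v`
for some trace `v` with `v I B`. -/
def IsView (B : Set A) (t w : Trace D) : Prop :=
  (∃ v, w * v = t ∧ v.IndepSet B) ∧
  ∀ w' v', w' * v' = t → v'.IndepSet B → w.length ≤ w'.length

/-- The `B`-view of a trace. -/
noncomputable def view (B : Set A) (t : Trace D) : Trace D :=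
  Classical.epsilon (IsView B t)

/-- A trace is prime if all its linearizations have the same last letter. -/
def IsPrime (t : Trace D) : Prop :=
  ∃ a : A, ∀ u : List A, mk D u = t → u.getLast? = some a

/-- A trace is `b`-prime if every linearization of it ends with the letter `b`. -/
def LastIs (b : A) (t : Trace D) : Prop :=
  ∀ u : List A, mk D u = t → u.getLast? = some b

end Trace

/-- A Zielonka automaton over the actions `A` and the processes `P`:
each process `p` has a finite state set `St p` with an initial state, final states
and a set `acts p` of actions (`A` is covered by the `acts p`); transitions form a
deterministic set of tuples `(a, (q_p)_{p ∈ dom a}, (q'_p)_{p ∈ dom a})`,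
modelled as a partial function `δ`. -/
structure ZAut (A : Type*) (P : Type*) where
  St : P → Type*
  stFinite : ∀ p, Finite (St p)
  init : ∀ p, St p
  final : ∀ p, Set (St p)
  acts : P → Set A
  covers : ∀ a : A, ∃ p, a ∈ acts p
  δ : ∀ a : A, (∀ p : {p : P // a ∈ acts p}, St p.1) →
      Option (∀ p : {p : P // a ∈ acts p}, St p.1)

namespace ZAut

open scoped Classical

variable {A P : Type*} (M : ZAut A P)

/-- The domain of an action: the processes taking part in it. -/
def dom (a : A) : Set P := {p | a ∈ M.acts p}

/-- Two actions are dependent iff their domains intersect. -/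
def Dep (a b : A) : Prop := ∃ p : P, p ∈ M.dom a ∧ p ∈ M.dom b

/-- The domain of a trace: the union of the domains of its letters. -/
def tdom (t : Trace M.Dep) : Set P := {p | ∃ a ∈ t.alph, p ∈ M.dom a}

/-- One step of the automaton on a global state. -/
noncomputable def step (q : ∀ p, M.St p) (a : A) : Option (∀ p, M.St p) :=
  (M.δ a (fun p => q p.1)).map
    (fun q' p => if h : a ∈ M.acts p then q' ⟨p, h⟩ else q p)

/-- The run of the automaton on a word, from the initial global state. -/
noncomputable def runWord (u : List A) : Option (∀ p, M.St p) :=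
  u.foldl (fun oq a => oq.bind (fun q => M.step q a)) (some fun p => M.init p)

/-- The global state `Q(t)` reached after a trace `t` (all linearizations give
the same run). -/
noncomputable def run (t : Trace M.Dep) : Option (∀ p, M.St p) :=
  Classical.epsilon (fun o => ∀ u : List A, Trace.mk M.Dep u = t → M.runWord u = o)

/-- A trace is a play if the automaton can execute it from the initial state. -/
def IsPlay (t : Trace M.Dep) : Prop :=
  ∀ u : List A, Trace.mk M.Dep u = t → (M.runWord u).isSome = true

/-- `a` is a maximal action of `t` : `t = t'·a` for some trace `t'`. -/
def MaxAct (t : Trace M.Dep) (a : A) : Prop :=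
  ∃ t', t = t' * Trace.mk M.Dep [a]

/-- `v I Q` : the domain of every letter of `v` is disjoint from `Q`. -/
def IndepProcs (v : Trace M.Dep) (Q : Set P) : Prop :=
  ∀ b ∈ v.alph, M.dom b ∩ Q = ∅

/-- A `Q`-broadcast: a prime play `u` such that for every play `uv` and every
action `a` maximal in `uv` whose domain meets both `Q` and `P ∖ Q`,
`u ⊑ view_a(uv)`. -/
def Broadcast (Q : Set P) (u : Trace M.Dep) : Prop :=
  u.IsPrime ∧ M.IsPlay u ∧
  ∀ (v : Trace M.Dep) (a : A), M.IsPlay (u * v) → M.MaxAct (u * v) a →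
    (M.dom a ∩ Q).Nonempty → (M.dom a ∩ Qᶜ).Nonempty →
    u.Prefix (Trace.view {a} (u * v))

end ZAut

end MazTrace

/-!
Levi's lemma for traces: if `u * v = w * z`, then the overlaps of the four factors give
`u = x * y`, `v = y' * z'`, `w = x * y'` and `z = y * z'` with `y` and `y'` independent. Take for
`w` the view of `u * v` for an action dependent on the last action `b` of the prime trace `u`, so
that `b` does not occur in `z`. A nonempty final factor `y` of `u` would contain `b`, hence so would
`z`; so `y = 1` and `u = x ⊑ w`.
-/

namespace MazTrace

variable {A : Type*} {D : A → A → Prop}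

namespace TraceRel

theorem erase [DecidableEq A] {u v : List A} (h : TraceRel D u v) (c : A) :
    TraceRel D (u.erase c) (v.erase c) := by
  induction h with
  | refl u => exact .refl _
  | swap u v a b hab =>
    by_cases hu : c ∈ u
    · simpa only [List.erase_append_left _ hu] using swap (u.erase c) v a b hab
    · simp only [List.erase_append_right _ hu, List.erase_cons, beq_iff_eq]
      split_ifs with ha hb
      · subst ha hb
        exact .refl _
      · exact .refl _
      · exact .refl _
      · exact swap u (v.erase c) a b hab
  | symm _ ih => exact ih.symm
  | trans _ _ ih₁ ih₂ => exact ih₁.trans ih₂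

theorem filter_eq {u v : List A} (h : TraceRel D u v) (p : A → Bool)
    (hp : ∀ a b, p a → p b → a ≠ b → D a b) : u.filter p = v.filter p := by
  induction h with
  | refl u => rfl
  | swap u v a b hab =>
    have hab' : p a → p b → a = b := fun ha hb => by_contra fun hne => hab (hp a b ha hb hne)
    simp only [List.filter_append, List.filter_cons]
    split_ifs with ha hb
    · rw [hab' ha hb]
    all_goals rfl
  | symm _ ih => exact ih.symm
  | trans _ _ ih₁ ih₂ => exact ih₁.trans ih₂

end TraceRel

namespace Trace

theorem mk_surjective : Function.Surjective (mk D) := Quotient.mk_surjective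

theorem mk_eq_mk {u v : List A} : mk D u = mk D v ↔ TraceRel D u v := Quotient.eq

theorem mk_mul_mk (u v : List A) : mk D u * mk D v = mk D (u ++ v) := rfl

theorem mk_nil : mk D [] = 1 := rfl

instance : Monoid (Trace D) where
  mul_assoc s t r := by
    obtain ⟨u, rfl⟩ := mk_surjective s
    obtain ⟨v, rfl⟩ := mk_surjective t
    obtain ⟨w, rfl⟩ := mk_surjective r
    simp only [mk_mul_mk, List.append_assoc]
  one_mul s := by
    obtain ⟨u, rfl⟩ := mk_surjective s
    rfl
  mul_one s := by
    obtain ⟨u, rfl⟩ := mk_surjective s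
    simp only [← mk_nil, mk_mul_mk, List.append_nil]

@[elab_as_elim]
theorem induction_on {motive : Trace D → Prop} (t : Trace D) (one : motive 1)
    (letter_mul : ∀ a t, motive t → motive (mk D [a] * t)) : motive t := by
  obtain ⟨u, rfl⟩ := mk_surjective t
  induction u with
  | nil => exact one
  | cons a u ih => exact letter_mul a _ ih

@[simp]
theorem mem_alph_mk {a : A} {u : List A} : a ∈ (mk D u).alph ↔ a ∈ u := Iff.rfl

@[simp]
theorem alph_one : (1 : Trace D).alph = ∅ := by
  ext a
  simp [← mk_nil]

@[simp]
theorem alph_letter (a : A) : (mk D [a]).alph = {a} := by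
  ext b
  simp

@[simp]
theorem alph_mul (s t : Trace D) : (s * t).alph = s.alph ∪ t.alph := by
  obtain ⟨u, rfl⟩ := mk_surjective s
  obtain ⟨v, rfl⟩ := mk_surjective t
  ext a
  simp [mk_mul_mk]

theorem exists_eq_mul_letter_mul_of_mem_alph {c : A} {t : Trace D} (hc : c ∈ t.alph) :
    ∃ x y, t = x * (mk D [c] * y) ∧ c ∉ x.alph := by
  obtain ⟨u, rfl⟩ := mk_surjective t
  obtain ⟨x, y, rfl, hx⟩ := List.eq_append_cons_of_mem hc
  exact ⟨mk D x, mk D y, rfl, hx⟩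

theorem indepSet_one (B : Set A) : (1 : Trace D).IndepSet B := by
  simp [IndepSet]

theorem indepSet_mul {s t : Trace D} {B : Set A} :
    (s * t).IndepSet B ↔ s.IndepSet B ∧ t.IndepSet B := by
  simp only [IndepSet, alph_mul, Set.mem_union, or_imp, forall_and]

theorem indepSet_union {t : Trace D} {B C : Set A} :
    t.IndepSet (B ∪ C) ↔ t.IndepSet B ∧ t.IndepSet C := by
  simp only [IndepSet, Set.mem_union, or_imp, forall_and]

theorem IndepSet.commute_letter {c : A} {t : Trace D} (h : t.IndepSet {c}) :
    Commute t (mk D [c]) := by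
  induction t using induction_on with
  | one => exact Commute.one_left _
  | letter_mul a t ih =>
    obtain ⟨ha, ht⟩ := indepSet_mul.1 h
    have hac : Commute (mk D [a]) (mk D [c]) :=
      mk_eq_mk.2 (.swap [] [] a c (ha a (by simp) c rfl))
    exact hac.mul_left (ih ht)

instance : IsLeftCancelMul (Trace D) where
  mul_left_cancel s := by
    classical
    induction s using induction_on with
    | one => exact isRegular_one.left
    | letter_mul a s ih =>
      refine IsLeftRegular.mul (fun t r h => ?_) ih
      obtain ⟨u, rfl⟩ := mk_surjective t
      obtain ⟨v, rfl⟩ := mk_surjective r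
      exact mk_eq_mk.2 (by simpa using (mk_eq_mk.1 h).erase a)

section Levi

variable [Std.Symm D]

theorem indepSet_of_letter_mul_eq_mul_letter_mul {c : A} {s x y : Trace D}
    (h : mk D [c] * s = x * (mk D [c] * y)) (hx : c ∉ x.alph) : x.IndepSet {c} := by
  classical
  simp only [IndepSet, Set.mem_singleton_iff, forall_eq]
  intro d hd hdc
  obtain ⟨s, rfl⟩ := mk_surjective s
  obtain ⟨x, rfl⟩ := mk_surjective x
  obtain ⟨y, rfl⟩ := mk_surjective y
  -- The projection to `{c, d}` starts with `c` on the left, but with a letter of `x` on the right.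
  let p : A → Bool := fun a => a = c ∨ a = d
  have hp : ∀ a b, p a → p b → a ≠ b → D a b := by
    have hcd := symm_of D hdc
    grind
  have hproj : (c :: s).filter p = (x ++ c :: y).filter p := (mk_eq_mk.1 h).filter_eq p hp
  have hdp : d ∈ x.filter p := List.mem_filter.2 ⟨hd, by simp [p]⟩
  obtain ⟨a, l, hl⟩ := List.exists_cons_of_ne_nil (List.ne_nil_of_mem hdp)
  obtain rfl : c = a := by simp_all [p]
  have hcp : c ∈ x.filter p := by simp [hl]
  exact hx (List.mem_filter.1 hcp).1

theorem exists_factor_of_letter_mul_eq_mul {c : A} {s u v : Trace D} (h : mk D [c] * s = u * v) :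
    (∃ u', u = mk D [c] * u' ∧ s = u' * v) ∨
      u.IndepSet {c} ∧ ∃ v', v = mk D [c] * v' ∧ s = u * v' := by
  by_cases hcu : c ∈ u.alph
  · obtain ⟨x, y, rfl, hx⟩ := exists_eq_mul_letter_mul_of_mem_alph hcu
    rw [mul_assoc, mul_assoc] at h
    have hxc := (indepSet_of_letter_mul_eq_mul_letter_mul h hx).commute_letter
    refine .inl ⟨x * y, hxc.left_comm y, mul_left_cancel (h.trans ?_)⟩
    rw [hxc.left_comm, mul_assoc]
  · have hcv : c ∈ v.alph := by
      have hc : c ∈ (u * v).alph := by simp [← h]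
      simpa [hcu] using hc
    obtain ⟨x, y, rfl, hx⟩ := exists_eq_mul_letter_mul_of_mem_alph hcv
    rw [← mul_assoc] at h
    obtain ⟨huc, hxc⟩ := indepSet_mul.1
      (indepSet_of_letter_mul_eq_mul_letter_mul h (by simp [hcu, hx]))
    refine .inr ⟨huc, x * y, hxc.commute_letter.left_comm y, mul_left_cancel (h.trans ?_)⟩
    rw [(huc.commute_letter.mul_left hxc.commute_letter).left_comm, mul_assoc]

theorem exists_levi_factors {u v w z : Trace D} (h : u * v = w * z) :
    ∃ x y y' z', u = x * y ∧ v = y' * z' ∧ w = x * y' ∧ z = y * z' ∧ y.IndepSet y'.alph := by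
  induction w using induction_on generalizing u v with
  | one =>
    refine ⟨1, u, 1, v, (one_mul u).symm, (one_mul v).symm, (one_mul 1).symm, ?_,
      by simp [IndepSet]⟩
    rw [h, one_mul]
  | letter_mul c w ih =>
    rw [mul_assoc] at h
    rcases exists_factor_of_letter_mul_eq_mul h.symm with ⟨u, rfl, hu⟩ | ⟨huc, v, rfl, hv⟩
    · obtain ⟨x, y, y', z', rfl, rfl, rfl, rfl, hy⟩ := ih hu.symm
      exact ⟨mk D [c] * x, y, y', z', (mul_assoc _ _ _).symm, rfl, (mul_assoc _ _ _).symm, rfl, hy⟩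
    · obtain ⟨x, y, y', z', rfl, rfl, rfl, rfl, hy⟩ := ih hv.symm
      obtain ⟨hxc, hyc⟩ := indepSet_mul.1 huc
      refine ⟨x, y, mk D [c] * y', z', rfl, (mul_assoc _ _ _).symm,
        (hxc.commute_letter.left_comm y').symm, rfl, ?_⟩
      rw [alph_mul, alph_letter]
      exact indepSet_union.2 ⟨hyc, hy⟩

end Levi

theorem IsPrime.lastIs {t : Trace D} {b : A} (h : (t * mk D [b]).IsPrime) :
    LastIs b (t * mk D [b]) := by
  obtain ⟨c, hc⟩ := h
  obtain ⟨u, rfl⟩ := mk_surjective t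
  obtain rfl : b = c := by simpa using hc (u ++ [b]) rfl
  exact hc

theorem LastIs.eq_one_or_mem_alph {b : A} {s t : Trace D} (h : LastIs b (s * t)) :
    t = 1 ∨ b ∈ t.alph := by
  obtain ⟨u, rfl⟩ := mk_surjective s
  obtain ⟨v, rfl⟩ := mk_surjective t
  rcases eq_or_ne v [] with rfl | hv
  · exact .inl rfl
  · have hlast : v.getLast? = some b := by
      simpa [List.getLast?_append_of_ne_nil _ hv] using h (u ++ v) rfl
    exact .inr (List.mem_of_getLast? hlast)

theorem LastIs.prefix_of_mul_eq_mul [Std.Symm D] {b : A} {u v w z : Trace D} (hu : LastIs b u)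
    (h : u * v = w * z) (hz : b ∉ z.alph) : u.Prefix w := by
  obtain ⟨x, y, y', z', rfl, -, rfl, rfl, -⟩ := exists_levi_factors h
  obtain rfl : y = 1 := hu.eq_one_or_mem_alph.resolve_right fun hy => hz (by simp [hy])
  exact ⟨y', by rw [mul_one]⟩

theorem exists_isView (B : Set A) (t : Trace D) : ∃ w, IsView B t w := by
  let S : Set (Trace D) := {w | ∃ v, w * v = t ∧ v.IndepSet B}
  have hS : S.Nonempty := ⟨t, 1, mul_one t, indepSet_one B⟩
  exact ⟨Function.argminOn length S hS, Function.argminOn_mem length S hS,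
    fun w' v' h hv => Function.argminOn_le length S ⟨v', h, hv⟩⟩

theorem isView_view (B : Set A) (t : Trace D) : IsView B t (view B t) :=
  Classical.epsilon_spec (exists_isView B t)

theorem LastIs.prefix_view [Std.Symm D] {b : A} {u : Trace D} (hu : LastIs b u) (v : Trace D)
    {B : Set A} {a : A} (ha : a ∈ B) (hba : D b a) : u.Prefix (view B (u * v)) := by
  obtain ⟨⟨z, hz, hzB⟩, -⟩ := isView_view B (u * v)
  exact hu.prefix_of_mul_eq_mul hz.symm fun hb => hzB b hb a ha hba

end Trace

namespace ZAut

variable {P : Type*} {M : ZAut A P}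

instance : Std.Symm M.Dep := ⟨fun _ _ ⟨p, ha, hb⟩ => ⟨p, hb, ha⟩⟩

theorem broadcast_dom {u : Trace M.Dep} {b : A} (hprime : u.IsPrime) (hplay : M.IsPlay u)
    (hmax : M.MaxAct u b) : M.Broadcast (M.dom b) u := by
  obtain ⟨t, rfl⟩ := hmax
  exact ⟨hprime, hplay, fun v a _ _ ⟨p, hpa, hpb⟩ _ =>
    hprime.lastIs.prefix_view v (Set.mem_singleton a) ⟨p, hpb, hpa⟩⟩

theorem broadcast_univ {u : Trace M.Dep} (hprime : u.IsPrime) (hplay : M.IsPlay u) :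
    M.Broadcast Set.univ u :=
  ⟨hprime, hplay, fun _ _ _ _ _ ⟨_, _, hp⟩ => absurd (Set.mem_univ _) hp⟩

theorem Broadcast.compl {Q : Set P} {u : Trace M.Dep} (h : M.Broadcast Q u) :
    M.Broadcast Qᶜ u :=
  ⟨h.1, h.2.1, fun v a hp hm hQc hQ => h.2.2 v a hp hm (by rwa [compl_compl] at hQ) hQc⟩

theorem broadcast_compl_iff {Q : Set P} {u : Trace M.Dep} :
    M.Broadcast Qᶜ u ↔ M.Broadcast Q u :=
  ⟨fun h => compl_compl Q ▸ h.compl, .compl⟩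

end ZAut

end MazTrace

open MazTrace in
theorem broadcast_basic_general {A P : Type*} (M : ZAut A P) (u : Trace M.Dep) (b : A)
    (hprime : u.IsPrime) (hplay : M.IsPlay u) (hmax : M.MaxAct u b) :
    M.Broadcast (M.dom b) u ∧ M.Broadcast (Set.univ : Set P) u ∧
      ∀ Q : Set P, (M.Broadcast Q u ↔ M.Broadcast Qᶜ u) :=
  ⟨ZAut.broadcast_dom hprime hplay hmax, ZAut.broadcast_univ hprime hplay,
    fun _ => ZAut.broadcast_compl_iff.symm⟩

open MazTrace in
/-- Let `u` be a prime play whose last (maximal) action is `b`. Then `u` is a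
`dom(b)`-broadcast, a `P`-broadcast, and for every `Q ⊆ P`, `u` is a
`Q`-broadcast iff it is a `(P ∖ Q)`-broadcast. -/
theorem broadcast_basic {A P : Type*} [Finite A] [Finite P] (M : ZAut A P)
    (u : Trace M.Dep) (b : A)
    (hprime : u.IsPrime) (hplay : M.IsPlay u) (hmax : M.MaxAct u b) :
    M.Broadcast (M.dom b) u ∧ M.Broadcast (Set.univ : Set P) u ∧
      ∀ Q : Set P, (M.Broadcast Q u ↔ M.Broadcast Qᶜ u) := by
  exact broadcast_basic_general M u b hprime hplay hmax
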